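/- Let u, v ∈ F₂ with ‖u‖ ≥ ‖v‖, put k = ‖u‖+1, and suppose that u and v are boundedly translation equivalent in F₂. Then for every chain ψ₁ of type (C1) of length at most 2‖u‖+5 one has: ‖σ^{k+1}ψ₁(u)‖ = ‖σ^{k}ψ₁(u)‖ if and only if ‖σ^{k+1}ψ₁(v)‖ = ‖σ^{k}ψ₁(v)‖, and ‖τ^{k+1}ψ₁(u)‖ = ‖τ^{k}ψ₁(u)‖ if and only if ‖τ^{k+1}ψ₁(v)‖ = ‖τ^{k}ψ₁(v)‖; and for every chain ψ₂ of type (C2) of length at most 2‖u‖+5 one has: ‖σ^{-k-1}ψ₂(u)‖ = ‖σ^{-k}ψ₂(u)‖ if and only if ‖σ^{-k-1}ψ₂(v)‖ = ‖σ^{-k}ψ₂(v)‖, and ‖τ^{-k-1}ψ₂(u)‖ = ‖τ^{-k}ψ₂(u)‖ if and only if ‖τ^{-k-1}ψ₂(v)‖ = ‖τ^{-k}ψ₂(v)‖. -/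

import Mathlib

noncomputable section

/-- The free group of rank two. -/
abbrev F : Type := FreeGroup (Fin 2)

/-- The generator `a`. -/
def ga : F := FreeGroup.of 0

/-- The generator `b`. -/
def gb : F := FreeGroup.of 1

/-- Build an automorphism of `F` from images of the generators together with
an explicit inverse. -/
def mkAut (x y xi yi : F)
    (h1 : FreeGroup.lift ![xi, yi] x = ga)
    (h2 : FreeGroup.lift ![xi, yi] y = gb)
    (h3 : FreeGroup.lift ![x, y] xi = ga)
    (h4 : FreeGroup.lift ![x, y] yi = gb) : MulAut F :=
  MonoidHom.toMulEquiv (FreeGroup.lift ![x, y]) (FreeGroup.lift ![xi, yi])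
    (by
      ext i
      fin_cases i
      · simpa [ga] using h1
      · simpa [gb] using h2)
    (by
      ext i
      fin_cases i
      · simpa [ga] using h3
      · simpa [gb] using h4)

/-- `σ : a ↦ ab, b ↦ b`. -/
def σ : MulAut F :=
  mkAut (ga * gb) gb (ga * gb⁻¹) gb
    (by simp [ga, gb]) (by simp [ga, gb]) (by simp [ga, gb]) (by simp [ga, gb])

/-- `τ : a ↦ a, b ↦ ba`. -/
def τ : MulAut F :=
  mkAut ga (gb * ga) ga (gb * ga⁻¹)
    (by simp [ga, gb]) (by simp [ga, gb]) (by simp [ga, gb]) (by simp [ga, gb])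

/-- `δ₁ : a ↦ b⁻¹ab, b ↦ b`. -/
def δ₁ : MulAut F :=
  mkAut (gb⁻¹ * ga * gb) gb (gb * ga * gb⁻¹) gb
    (by simp [ga, gb, mul_assoc]) (by simp [ga, gb]) (by simp [ga, gb, mul_assoc]) (by simp [ga, gb])

/-- `δ₂ : a ↦ bab⁻¹, b ↦ b`. -/
def δ₂ : MulAut F :=
  mkAut (gb * ga * gb⁻¹) gb (gb⁻¹ * ga * gb) gb
    (by simp [ga, gb, mul_assoc]) (by simp [ga, gb]) (by simp [ga, gb, mul_assoc]) (by simp [ga, gb])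

/-- `δ₃ : a ↦ a, b ↦ a⁻¹ba`. -/
def δ₃ : MulAut F :=
  mkAut ga (ga⁻¹ * gb * ga) ga (ga * gb * ga⁻¹)
    (by simp [ga, gb]) (by simp [ga, gb, mul_assoc]) (by simp [ga, gb]) (by simp [ga, gb, mul_assoc])

/-- `δ₄ : a ↦ a, b ↦ aba⁻¹`. -/
def δ₄ : MulAut F :=
  mkAut ga (ga * gb * ga⁻¹) ga (ga⁻¹ * gb * ga)
    (by simp [ga, gb]) (by simp [ga, gb, mul_assoc]) (by simp [ga, gb]) (by simp [ga, gb, mul_assoc])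

/-- `π : a ↦ b, b ↦ a⁻¹`. -/
def pi' : MulAut F :=
  mkAut gb ga⁻¹ gb⁻¹ ga
    (by simp [ga, gb]) (by simp [ga, gb]) (by simp [ga, gb]) (by simp [ga, gb])

/-- Word length of (the reduced word representing) an element of `F`. -/
def len (w : F) : ℕ := w.toWord.length

/-- Cyclic length: minimal word length among all conjugates. -/
def cyclen (w : F) : ℕ := sInf {n | ∃ g : F, len (g * w * g⁻¹) = n}

/-- The chain `τ^{m_k}σ^{l_k}⋯τ^{m_1}σ^{l_1}` of type (C1) determined by the list
`[(l_k, m_k), …, (l_1, m_1)]` of pairs of exponents. -/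
def chainC1 (c : List (ℕ × ℕ)) : MulAut F :=
  (c.map fun p => τ ^ p.2 * σ ^ p.1).prod

/-- The chain `τ^{-m_k}σ^{-l_k}⋯τ^{-m_1}σ^{-l_1}` of type (C2) determined by the list
`[(l_k, m_k), …, (l_1, m_1)]` of pairs of exponents. -/
def chainC2 (c : List (ℕ × ℕ)) : MulAut F :=
  (c.map fun p => (τ ^ p.2)⁻¹ * (σ ^ p.1)⁻¹).prod

/-- Number of factors of `σ` in a chain. -/
def sigmaCount (c : List (ℕ × ℕ)) : ℕ := (c.map Prod.fst).sum

/-- Number of factors of `τ` in a chain. -/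
def tauCount (c : List (ℕ × ℕ)) : ℕ := (c.map Prod.snd).sum

/-- The length `Σ (l_i + m_i)` of a chain. -/
def chainLen (c : List (ℕ × ℕ)) : ℕ := sigmaCount c + tauCount c

/-- A Whitehead automorphism of type (W1): it permutes `{a, a⁻¹, b, b⁻¹}`. -/
def IsW1 (β : MulAut F) : Prop :=
  β ga ∈ ({ga, ga⁻¹, gb, gb⁻¹} : Set F) ∧ β gb ∈ ({ga, ga⁻¹, gb, gb⁻¹} : Set F)

/-- A chain of type (C1). -/
def IsC1 (φ : MulAut F) : Prop := ∃ c : List (ℕ × ℕ), c ≠ [] ∧ φ = chainC1 c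

/-- A chain of type (C2). -/
def IsC2 (φ : MulAut F) : Prop := ∃ c : List (ℕ × ℕ), c ≠ [] ∧ φ = chainC2 c

/-- A positive element: a product of the generators `a` and `b`. -/
def IsPositive (w : F) : Prop := w ∈ Submonoid.closure ({ga, gb} : Set F)

/-- The four automorphisms `δ₁, δ₂, δ₃, δ₄`. -/
def δIdx : Fin 4 → MulAut F := ![δ₁, δ₂, δ₃, δ₄]

/-!
Call a letter of a cyclic word *opposed* if the nearest letters of the other kind on its two sides
both have the opposite sign. Writing a cyclic word as `a^{e₁} b^{n₁} ⋯ a^{eₘ} b^{nₘ}` with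
`eᵢ = ±1`, up to conjugation `σ ^ t` adds `eᵢ t` to `nᵢ` if `eᵢ = eᵢ₊₁` and leaves `nᵢ` unchanged
otherwise. Hence `σ`, and by symmetry `τ`, increases neither the number of opposed letters `a^{±1}`
nor that of opposed letters `b^{±1}`, so these numbers stay at most `‖w‖` along positive chains
applied to `w`. As soon as `t` is at least the number of opposed letters `b^{±1}`, the length
`‖σ ^ t w‖` grows with `t` at a constant rate. Equality of two consecutive lengths beyond that
point therefore means that the sequence is bounded, and this is invariant under bounded translation
equivalence. The case of `τ` follows by exchanging `a` and `b`. Up to inner automorphisms, `b ↦ b⁻¹`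
conjugates `σ` to `σ⁻¹` and `τ` to `τ⁻¹`, so it turns chains (C2) into chains (C1).
-/

open FreeGroup hiding map_one map_mul map_inv

section Words

variable {α β : Type*} {L L₁ L₂ : List (α × Bool)}

theorem isCyclicallyReduced_iff_isReduced_append_self :
    IsCyclicallyReduced L ↔ FreeGroup.IsReduced (L ++ L) := by
  rw [isCyclicallyReduced_iff, FreeGroup.IsReduced, FreeGroup.IsReduced, List.isChain_append]
  simp

theorem isCyclicallyReduced_cons_iff {p : α × Bool} :
    IsCyclicallyReduced (p :: L) ↔ FreeGroup.IsReduced (p :: L ++ [p]) := by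
  rw [isCyclicallyReduced_iff, FreeGroup.IsReduced, FreeGroup.IsReduced, List.isChain_append]
  simp

theorem isCyclicallyReduced_append_comm (h : IsCyclicallyReduced (L₁ ++ L₂)) :
    IsCyclicallyReduced (L₂ ++ L₁) :=
  isCyclicallyReduced_iff_isReduced_append_self.2 <|
    (h.flatten_replicate 3).isReduced.infix ⟨L₁, L₂, by simp [List.replicate_succ]⟩

theorem isCyclicallyReduced_map {f : α → β} (hf : Function.Injective f)
    (h : IsCyclicallyReduced L) : IsCyclicallyReduced (L.map (Prod.map f id)) := by
  rw [isCyclicallyReduced_iff_isReduced_append_self] at h ⊢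
  rw [← List.map_append, FreeGroup.IsReduced, List.isChain_map]
  exact h.imp fun p q hpq hfpq => hpq (hf hfpq)

theorem isConj_mk_append_comm (L₁ L₂ : List (α × Bool)) :
    IsConj (mk (L₁ ++ L₂)) (mk (L₂ ++ L₁)) := by
  rw [isConj_iff, ← mul_mk, ← mul_mk]
  exact ⟨(mk L₁)⁻¹, by group⟩

theorem exists_isCyclicallyReduced_isConj_mk (w : FreeGroup α) :
    ∃ L : List (α × Bool), IsCyclicallyReduced L ∧ IsConj (mk L) w := by
  classical
  refine ⟨reduceCyclically w.toWord, reduceCyclically.isCyclicallyReduced isReduced_toWord, ?_⟩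
  rw [isConj_iff]
  refine ⟨mk (reduceCyclically.conjugator w.toWord), ?_⟩
  rw [inv_mk, mul_mk, mul_mk, reduceCyclically.conj_conjugator_reduceCyclically, mk_toWord]

variable [DecidableEq α]

theorem norm_mk_of_isReduced (h : FreeGroup.IsReduced L) : (mk L).norm = L.length := by
  rw [FreeGroup.norm, toWord_mk, h.reduce_eq]

theorem freeGroup_norm_pow_le (x : FreeGroup α) (n : ℕ) : (x ^ n).norm ≤ n * x.norm := by
  induction n with
  | zero => simp
  | succ n ih => rw [pow_succ, add_one_mul]; exact (FreeGroup.norm_mul_le _ _).trans (by gcongr)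

theorem norm_mk_pow_of_isCyclicallyReduced (h : IsCyclicallyReduced L) (n : ℕ) :
    (mk L ^ n).norm = n * L.length := by
  rw [pow_mk, norm_mk_of_isReduced (h.flatten_replicate n).isReduced]
  simp

theorem length_le_norm_conj (h : IsCyclicallyReduced L) (g : FreeGroup α) :
    L.length ≤ (g * mk L * g⁻¹).norm := by
  set x := g * mk L * g⁻¹ with hx
  -- Conjugation changes the norm of a power by a constant, so compare the growth of powers.
  have mul_length_le (n : ℕ) : n * L.length ≤ n * x.norm + 2 * g.norm := calc
    n * L.length = (g⁻¹ * x ^ n * g).norm := by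
      rw [← norm_mk_pow_of_isCyclicallyReduced h, hx, conj_pow]; group
    _ ≤ (g⁻¹ * x ^ n).norm + g.norm := FreeGroup.norm_mul_le _ _
    _ ≤ g⁻¹.norm + (x ^ n).norm + g.norm := by gcongr; exact FreeGroup.norm_mul_le _ _
    _ ≤ n * x.norm + 2 * g.norm := by
      rw [norm_inv_eq]; linarith [freeGroup_norm_pow_le x n]
  by_contra! hlt
  nlinarith [mul_length_le (2 * g.norm + 1)]

theorem freeGroup_norm_map_le [DecidableEq β] (φ : FreeGroup α →* FreeGroup β)
    (hφ : ∀ i, (φ (of i)).norm ≤ 1) (w : FreeGroup α) : (φ w).norm ≤ w.norm := by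
  have norm_letter_le (p : α × Bool) : (φ (mk [p])).norm ≤ 1 := by
    rcases p with ⟨i, _ | _⟩
    · rw [← norm_inv_eq, ← map_inv, inv_mk]
      exact hφ i
    · exact hφ i
  have norm_map_mk_le (L : List (α × Bool)) : (φ (mk L)).norm ≤ L.length := by
    induction L with
    | nil => simp [← one_eq_mk]
    | cons p L ih =>
      rw [← List.singleton_append, ← mul_mk, map_mul, List.length_append]
      exact (FreeGroup.norm_mul_le _ _).trans (add_le_add (norm_letter_le p) ih)
  calc (φ w).norm = (φ (mk w.toWord)).norm := by rw [mk_toWord]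
    _ ≤ w.norm := norm_map_mk_le w.toWord

end Words

section CyclicLength

theorem cyclen_le_len {w w' : F} (h : IsConj w w') : cyclen w ≤ len w' := by
  obtain ⟨g, rfl⟩ := isConj_iff.1 h
  exact Nat.sInf_le ⟨g, rfl⟩

theorem exists_isConj_len_eq_cyclen (w : F) : ∃ w', IsConj w w' ∧ len w' = cyclen w := by
  obtain ⟨g, hg⟩ := Nat.sInf_mem (s := {n | ∃ g : F, len (g * w * g⁻¹) = n}) ⟨_, 1, rfl⟩
  exact ⟨_, isConj_iff.2 ⟨g, rfl⟩, hg⟩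

theorem cyclen_eq_of_isConj {w w' : F} (h : IsConj w w') : cyclen w = cyclen w' := by
  have cyclen_le {x y : F} (hxy : IsConj x y) : cyclen x ≤ cyclen y := by
    obtain ⟨y', hy, hlen⟩ := exists_isConj_len_eq_cyclen y
    exact hlen ▸ cyclen_le_len (hxy.trans hy)
  exact (cyclen_le h).antisymm (cyclen_le h.symm)

theorem cyclen_mk {L : List (Fin 2 × Bool)} (h : IsCyclicallyReduced L) :
    cyclen (mk L) = L.length := by
  apply le_antisymm
  · exact (cyclen_le_len (.refl _)).trans norm_mk_le
  · obtain ⟨w, hw, hlen⟩ := exists_isConj_len_eq_cyclen (mk L)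
    obtain ⟨g, rfl⟩ := isConj_iff.1 hw
    exact hlen ▸ length_le_norm_conj h g

theorem cyclen_map_le (φ : F →* F) (hφ : ∀ i, len (φ (of i)) ≤ 1) (w : F) :
    cyclen (φ w) ≤ cyclen w := by
  obtain ⟨w', hw, hlen⟩ := exists_isConj_len_eq_cyclen w
  exact hlen ▸ (cyclen_le_len (φ.map_isConj hw)).trans (freeGroup_norm_map_le φ hφ w')

theorem cyclen_apply_of_involutive {φ : MulAut F} (hinv : Function.Involutive φ)
    (hφ : ∀ i, len (φ (of i)) ≤ 1) (w : F) : cyclen (φ w) = cyclen w := by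
  apply (cyclen_map_le φ.toMonoidHom hφ w).antisymm
  simpa [hinv w] using cyclen_map_le φ.toMonoidHom hφ (φ w)

end CyclicLength

section OpposedLetters

variable {α β : Type*} [DecidableEq α] [DecidableEq β]

/-- The sign of the first letter of `L` whose generator is not `x`, if there is one. -/
def firstSign (x : α) (L : List (α × Bool)) : Option Bool :=
  (L.find? (·.1 ≠ x)).map Prod.snd

/-- The sign of the last letter of `L` whose generator is not `x`, if there is one. -/
def lastSign (x : α) (L : List (α × Bool)) : Option Bool :=
  firstSign x L.reverse

/-- The number of opposed letters `x^{±1}` of `L`: those for which the nearest letter with generator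
other than `x`, both to the left and to the right, has the opposite sign. Here `l` and `r` stand for
the signs of the nearest such letters beyond the left and the right end of `L`. -/
def opposedCount (x : α) : Option Bool → List (α × Bool) → Option Bool → ℕ
  | _, [], _ => 0
  | l, (y, e) :: L, r =>
    if y = x then
      (if l = some !e ∧ (firstSign x L).or r = some !e then 1 else 0) + opposedCount x l L r
    else opposedCount x (some e) L r

/-- The number of opposed letters `x^{±1}` of `L` read as a cyclic word. -/
def cyclicOpposedCount (x : α) (L : List (α × Bool)) : ℕ :=
  opposedCount x (lastSign x L) L (firstSign x L)

theorem firstSign_append (x : α) (L M : List (α × Bool)) :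
    firstSign x (L ++ M) = (firstSign x L).or (firstSign x M) := by
  simp [firstSign, Option.map_or]

theorem lastSign_append (x : α) (L M : List (α × Bool)) :
    lastSign x (L ++ M) = (lastSign x M).or (lastSign x L) := by
  simp [lastSign, firstSign_append]

theorem lastSign_cons (x : α) (p : α × Bool) (L : List (α × Bool)) :
    lastSign x (p :: L) = (lastSign x L).or (if p.1 = x then none else some p.2) := by
  rw [← List.singleton_append, lastSign_append]
  by_cases h : p.1 = x <;> simp [lastSign, firstSign, h]

theorem firstSign_replicate (x y : α) (s : Bool) (n : ℕ) :
    firstSign x (List.replicate n (y, s)) = if n = 0 ∨ y = x then none else some s := by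
  by_cases hn : n = 0 <;> by_cases hy : y = x <;> simp [firstSign, hn, hy]

theorem lastSign_replicate (x y : α) (s : Bool) (n : ℕ) :
    lastSign x (List.replicate n (y, s)) = if n = 0 ∨ y = x then none else some s := by
  rw [lastSign, List.reverse_replicate, firstSign_replicate]

theorem firstSign_map {f : α → β} (hf : Function.Injective f) (x : α) (L : List (α × Bool)) :
    firstSign (f x) (L.map (Prod.map f id)) = firstSign x L := by
  simp [firstSign, Function.comp_def, hf.eq_iff]

theorem lastSign_map {f : α → β} (hf : Function.Injective f) (x : α) (L : List (α × Bool)) :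
    lastSign (f x) (L.map (Prod.map f id)) = lastSign x L := by
  rw [lastSign, ← List.map_reverse, firstSign_map hf, lastSign]

theorem opposedCount_append (x : α) (l r : Option Bool) (L M : List (α × Bool)) :
    opposedCount x l (L ++ M) r =
      opposedCount x l L ((firstSign x M).or r) + opposedCount x ((lastSign x L).or l) M r := by
  induction L generalizing l with
  | nil => simp [opposedCount, lastSign, firstSign]
  | cons p L ih =>
    obtain ⟨y, e⟩ := p
    by_cases hy : y = x <;>
      simp [opposedCount, lastSign_cons, firstSign_append, Option.or_assoc, ih, hy, add_assoc]

theorem opposedCount_replicate_self (x : α) (s : Bool) (n : ℕ) (l r : Option Bool) :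
    opposedCount x l (List.replicate n (x, s)) r =
      if l = some !s ∧ r = some !s then n else 0 := by
  induction n with
  | zero => simp [opposedCount]
  | succ n ih =>
    simp only [List.replicate_succ, opposedCount, ih, firstSign_replicate, or_true, if_true,
      Option.none_or]
    split <;> omega

theorem opposedCount_replicate_of_ne {x y : α} (h : y ≠ x) (s : Bool) (n : ℕ)
    (l r : Option Bool) : opposedCount x l (List.replicate n (y, s)) r = 0 := by
  induction n generalizing l with
  | zero => rfl
  | succ n ih => simp [List.replicate_succ, opposedCount, ih, h]

theorem opposedCount_map {f : α → β} (hf : Function.Injective f) (x : α) (l r : Option Bool)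
    (L : List (α × Bool)) :
    opposedCount (f x) l (L.map (Prod.map f id)) r = opposedCount x l L r := by
  induction L generalizing l with
  | nil => rfl
  | cons p L ih => simp [opposedCount, firstSign_map hf, hf.eq_iff, ih]

theorem opposedCount_le_length (x : α) (l r : Option Bool) (L : List (α × Bool)) :
    opposedCount x l L r ≤ L.length := by
  induction L generalizing l with
  | nil => rfl
  | cons p L ih =>
    have h₁ := ih l
    have h₂ := ih (some p.2)
    simp only [opposedCount, List.length_cons]
    split_ifs <;> omega

theorem cyclicOpposedCount_append_comm (x : α) (L M : List (α × Bool)) :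
    cyclicOpposedCount x (L ++ M) = cyclicOpposedCount x (M ++ L) := by
  have or_or_self (o o' : Option Bool) : o.or (o'.or o) = o.or o' := by
    cases o <;> cases o' <;> rfl
  simp only [cyclicOpposedCount, opposedCount_append, firstSign_append, lastSign_append,
    or_or_self]
  exact add_comm _ _

theorem cyclicOpposedCount_map {f : α → β} (hf : Function.Injective f) (x : α)
    (L : List (α × Bool)) :
    cyclicOpposedCount (f x) (L.map (Prod.map f id)) = cyclicOpposedCount x L := by
  rw [cyclicOpposedCount, firstSign_map hf, lastSign_map hf, opposedCount_map hf,
    cyclicOpposedCount]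

end OpposedLetters

namespace Syllables

/-- The reduced word representing `b ^ n`. -/
def bPow (n : ℤ) : List (Fin 2 × Bool) :=
  List.replicate n.natAbs (1, decide (0 < n))

/-- The word `a^{e₁} b^{n₁} a^{e₂} b^{n₂} ⋯` with syllables `[(e₁, n₁), (e₂, n₂), …]`, where the
exponents `eᵢ = ±1` of `a` are encoded by their signs. -/
def word : List (Bool × ℤ) → List (Fin 2 × Bool)
  | [] => []
  | (e, n) :: d => (0, e) :: (bPow n ++ word d)

/-- The sign of the first `a` in `word d`, or `r` if there is none. -/
def headSign : List (Bool × ℤ) → Bool → Bool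
  | [], r => r
  | (e, _) :: _, _ => e

/-- The effect of `σ ^ t` on the exponent `n` of `b` in `a^e b^n a^q`. -/
def twistExp (t : ℤ) (e q : Bool) (n : ℤ) : ℤ :=
  if e = q then n + (if e then t else -t) else n

/-- The effect of `σ ^ t` on syllables that are followed by a letter `a` of sign `r`. -/
def twist (t : ℤ) : List (Bool × ℤ) → Bool → List (Bool × ℤ)
  | [], _ => []
  | (e, n) :: d, r => (e, twistExp t e (headSign d r) n) :: twist t d r

/-- The sign of the letters of `bPow n`, if there are any. -/
def expSign (n : ℤ) : Option Bool :=
  if n = 0 then none else some (decide (0 < n))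

variable {t n : ℤ} {e q r : Bool} {d : List (Bool × ℤ)}

theorem headSign_twist : headSign (twist t d r) r = headSign d r := by
  cases d <;> rfl

section Reduced

theorem isReduced_cons_bPow_append_cons_iff {M : List (Fin 2 × Bool)} :
    FreeGroup.IsReduced ((0, e) :: (bPow n ++ (0, q) :: M)) ↔
      (e ≠ q → n ≠ 0) ∧ FreeGroup.IsReduced ((0, q) :: M) := by
  rcases eq_or_ne n 0 with rfl | hn
  · simp [bPow, isReduced_cons_cons]
  · have head_bPow : (bPow n).head? = some (1, decide (0 < n)) := by
      simp [bPow, List.head?_replicate, hn]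
    have getLast_bPow : (bPow n).getLast? = some (1, decide (0 < n)) := by
      simp [bPow, List.getLast?_replicate, hn]
    have isChain_bPow : (bPow n).IsChain fun p q => p.1 = q.1 → p.2 = q.2 :=
      List.isChain_replicate_of_rel _ (by simp)
    rw [FreeGroup.IsReduced, List.isChain_cons, List.isChain_append]
    simp [head_bPow, getLast_bPow, isChain_bPow, hn, FreeGroup.IsReduced]

theorem isReduced_word_cons_append_iff :
    FreeGroup.IsReduced (word ((e, n) :: d) ++ [(0, r)]) ↔
      (e ≠ headSign d r → n ≠ 0) ∧ FreeGroup.IsReduced (word d ++ [(0, r)]) := by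
  obtain ⟨M, hM⟩ : ∃ M, word d ++ [(0, r)] = (0, headSign d r) :: M := by
    cases d <;> exact ⟨_, rfl⟩
  rw [word, List.cons_append, List.append_assoc, hM, isReduced_cons_bPow_append_cons_iff]

theorem isReduced_word_twist_append (h : FreeGroup.IsReduced (word d ++ [(0, r)])) :
    FreeGroup.IsReduced (word (twist t d r) ++ [(0, r)]) := by
  induction d with
  | nil => exact h
  | cons p d ih =>
    obtain ⟨hp, hd⟩ := isReduced_word_cons_append_iff.1 h
    refine isReduced_word_cons_append_iff.2 ⟨fun hne => ?_, ih hd⟩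
    rw [headSign_twist] at hne
    rw [twistExp, if_neg hne]
    exact hp hne

theorem isCyclicallyReduced_word_iff :
    IsCyclicallyReduced (word ((e, n) :: d)) ↔
      FreeGroup.IsReduced (word ((e, n) :: d) ++ [(0, e)]) :=
  isCyclicallyReduced_cons_iff

theorem isCyclicallyReduced_word_twist (h : IsCyclicallyReduced (word ((e, n) :: d))) :
    IsCyclicallyReduced (word (twist t ((e, n) :: d) e)) :=
  isCyclicallyReduced_word_iff.2 (isReduced_word_twist_append (isCyclicallyReduced_word_iff.1 h))

theorem cons_bPow {s : Bool} (h : n ≠ 0 → s = decide (0 < n)) :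
    (1, s) :: bPow n = bPow (n + if s then 1 else -1) := by
  rw [bPow, bPow, List.eq_replicate_iff]
  cases s <;> grind

theorem exists_eq_bPow_append_word {L : List (Fin 2 × Bool)} (h : FreeGroup.IsReduced L) :
    ∃ n d, L = bPow n ++ word d := by
  induction L with
  | nil => exact ⟨0, [], rfl⟩
  | cons p L ih =>
    obtain ⟨n, d, rfl⟩ := ih h.of_cons
    obtain ⟨i, s⟩ := p
    fin_cases i
    · exact ⟨0, (s, n) :: d, rfl⟩
    · have hsign : n ≠ 0 → s = decide (0 < n) := fun hn =>
        (List.isChain_cons.1 h).1 (1, decide (0 < n))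
          (by simp [bPow, List.head?_replicate, hn]) rfl
      exact ⟨_, d, congrArg (· ++ word d) (cons_bPow hsign)⟩

theorem exists_eq_bPow_or_rotation_eq_word {L : List (Fin 2 × Bool)} (h : IsCyclicallyReduced L) :
    (∃ n, L = bPow n) ∨ ∃ L₁ L₂ e n d, L = L₁ ++ L₂ ∧ L₂ ++ L₁ = word ((e, n) :: d) := by
  obtain ⟨m, d, rfl⟩ := exists_eq_bPow_append_word h.isReduced
  rcases d with _ | ⟨⟨e, n⟩, d⟩
  · exact .inl ⟨m, by simp [word]⟩
  · right
    have hred : FreeGroup.IsReduced (bPow n ++ word d ++ bPow m) :=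
      (isCyclicallyReduced_append_comm h).isReduced.of_cons
    obtain ⟨n', d', h'⟩ := exists_eq_bPow_append_word hred
    exact ⟨bPow m, word ((e, n) :: d), e, n', d', rfl, by simp [word, ← h']⟩

end Reduced

section Opposed

variable {l l' o o' : Option Bool}

theorem expSign_eq_some_iff {s : Bool} : expSign n = some s ↔ if s then 0 < n else n < 0 := by
  cases s <;> grind [expSign]

theorem firstSign_zero_bPow : firstSign 0 (bPow n) = expSign n := by
  simp [bPow, expSign, firstSign_replicate]

theorem lastSign_zero_bPow : lastSign 0 (bPow n) = expSign n := by
  simp [bPow, expSign, lastSign_replicate]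

theorem firstSign_one_word_or : (firstSign 1 (word d)).or (some r) = some (headSign d r) := by
  cases d <;> simp [word, headSign, firstSign]

theorem opposedCount_one_word_cons :
    opposedCount 1 l (word ((e, n) :: d)) (some r) =
      (if e = headSign d r then (if e then -n else n).toNat else 0) +
        opposedCount 1 (some e) (word d) (some r) := by
  have lastSign_bPow : lastSign 1 (bPow n) = none := by simp [bPow, lastSign_replicate]
  rw [word, opposedCount, if_neg (by decide), opposedCount_append, lastSign_bPow,
    firstSign_one_word_or, bPow, opposedCount_replicate_self, Option.none_or]
  congr 1
  generalize headSign d r = q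
  rcases lt_or_ge 0 n with hn | hn <;> cases e <;> cases q <;> grind

theorem opposedCount_zero_word_cons :
    opposedCount 0 l (word ((e, n) :: d)) o =
      (if l = some !e ∧ (expSign n).or ((firstSign 0 (word d)).or o) = some !e then 1 else 0) +
        opposedCount 0 ((expSign n).or l) (word d) o := by
  rw [word, opposedCount, if_pos rfl, opposedCount_append, firstSign_append, firstSign_zero_bPow,
    lastSign_zero_bPow, bPow, opposedCount_replicate_of_ne (by decide), zero_add, Option.or_assoc]

theorem opposedCount_one_word_twist_le (ht : 0 ≤ t) :
    opposedCount 1 l (word (twist t d r)) (some r) ≤ opposedCount 1 l (word d) (some r) := by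
  induction d generalizing l with
  | nil => rfl
  | cons p d ih =>
    obtain ⟨e, n⟩ := p
    rw [twist, opposedCount_one_word_cons, opposedCount_one_word_cons, headSign_twist, twistExp]
    refine Nat.add_le_add ?_ ih
    split_ifs <;> omega

-- A power of `b` that cancels under `σ ^ t` had sign opposite to both neighbouring letters `a`.
theorem expSign_eq_of_twistExp {s : Bool} (ht : 0 < t) (hn : e ≠ q → n ≠ 0) (hs : s = e ∨ s = q)
    (h : (expSign (twistExp t e q n)).or o = some !s) : expSign n = some !s := by
  have twistExp_cases : twistExp t e q n = 0 ∨ expSign (twistExp t e q n) = some !s := by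
    by_cases h₀ : twistExp t e q n = 0
    · exact .inl h₀
    · exact .inr (by simpa [expSign, h₀] using h)
  rw [expSign_eq_some_iff] at twistExp_cases ⊢
  cases e <;> cases q <;> cases s <;> grind [twistExp]

theorem opposedCount_zero_word_twist_le (ht : 0 < t)
    (hd : FreeGroup.IsReduced (word d ++ [(0, r)]))
    (hl : l' = some !headSign d r → l = some !headSign d r) :
    opposedCount 0 l' (word (twist t d r)) o' ≤ opposedCount 0 l (word d) o := by
  induction d generalizing l l' with
  | nil => rfl
  | cons p d ih =>
    obtain ⟨e, n⟩ := p
    obtain ⟨hn, hd⟩ := isReduced_word_cons_append_iff.1 hd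
    rw [twist, opposedCount_zero_word_cons, opposedCount_zero_word_cons]
    refine Nat.add_le_add ?_ (ih hd fun h => ?_)
    · have next_eq (h : (expSign (twistExp t e (headSign d r) n)).or
          ((firstSign 0 (word (twist t d r))).or o') = some !e) : expSign n = some !e :=
        expSign_eq_of_twistExp ht hn (.inl rfl) h
      grind [headSign]
    · rw [expSign_eq_of_twistExp ht hn (.inr rfl) h, Option.some_or]

theorem lastSign_zero_word_cons :
    lastSign 0 (word ((e, n) :: d)) = (lastSign 0 (word d)).or (expSign n) := by
  rw [word, lastSign_cons, if_pos rfl, Option.or_none, lastSign_append, lastSign_zero_bPow]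

theorem lastSign_zero_word_eq_of_twist (ht : 0 < t)
    (hd : FreeGroup.IsReduced (word ((e, n) :: d) ++ [(0, r)]))
    (h : (lastSign 0 (word (twist t ((e, n) :: d) r))).or o = some !r) :
    lastSign 0 (word ((e, n) :: d)) = some !r := by
  induction d generalizing e n o with
  | nil =>
    obtain ⟨hn, -⟩ := isReduced_word_cons_append_iff.1 hd
    rw [twist, lastSign_zero_word_cons] at h
    rw [lastSign_zero_word_cons]
    exact expSign_eq_of_twistExp ht hn (.inr rfl) h
  | cons p d ih =>
    obtain ⟨-, hd⟩ := isReduced_word_cons_append_iff.1 hd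
    rw [twist, lastSign_zero_word_cons, Option.or_assoc] at h
    rw [lastSign_zero_word_cons, ih hd h, Option.some_or]

theorem cyclicOpposedCount_one_word_cons :
    cyclicOpposedCount 1 (word ((e, n) :: d)) =
      opposedCount 1 (some e) (word ((e, n) :: d)) (some e) := by
  have firstSign_word : firstSign 1 (word ((e, n) :: d)) = some e := rfl
  rw [cyclicOpposedCount, firstSign_word, opposedCount_one_word_cons, opposedCount_one_word_cons]

theorem cyclicOpposedCount_word_twist_le (ht : 0 < t)
    (h : IsCyclicallyReduced (word ((e, n) :: d))) (x : Fin 2) :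
    cyclicOpposedCount x (word (twist t ((e, n) :: d) e)) ≤
      cyclicOpposedCount x (word ((e, n) :: d)) := by
  fin_cases x
  · have hred := isCyclicallyReduced_word_iff.1 h
    exact opposedCount_zero_word_twist_le ht hred fun hlast =>
      lastSign_zero_word_eq_of_twist ht hred (o := none) (by rw [Option.or_none]; exact hlast)
  · calc cyclicOpposedCount 1 (word (twist t ((e, n) :: d) e))
        = opposedCount 1 (some e) (word (twist t ((e, n) :: d) e)) (some e) :=
          cyclicOpposedCount_one_word_cons
      _ ≤ opposedCount 1 (some e) (word ((e, n) :: d)) (some e) :=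
          opposedCount_one_word_twist_le ht.le
      _ = cyclicOpposedCount 1 (word ((e, n) :: d)) := cyclicOpposedCount_one_word_cons.symm

-- For `t ≥ K` no opposed letter `b` is left, so `σ` lengthens every `b ^ n` between equal letters.
theorem exists_length_word_twist_succ {K : ℕ} (h : opposedCount 1 l (word d) (some r) ≤ K) :
    ∃ s, ∀ t : ℕ, K ≤ t →
      (word (twist (t + 1) d r)).length = (word (twist t d r)).length + s := by
  induction d generalizing l with
  | nil => exact ⟨0, fun _ _ => rfl⟩
  | cons p d ih =>
    obtain ⟨e, n⟩ := p
    rw [opposedCount_one_word_cons] at h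
    obtain ⟨s, hs⟩ := ih (le_of_add_le_right h)
    refine ⟨s + if e = headSign d r then 1 else 0, fun t ht => ?_⟩
    simp only [twist, word, bPow, twistExp, List.length_cons, List.length_append,
      List.length_replicate, hs t ht]
    split_ifs at h ⊢ <;> omega

end Opposed

end Syllables

section Automorphisms

theorem mulAut_ext {φ ψ : MulAut F} (ha : φ ga = ψ ga) (hb : φ gb = ψ gb) : φ = ψ := by
  refine MulEquiv.toMonoidHom_injective (FreeGroup.ext_hom _ _ fun i => ?_)
  fin_cases i
  exacts [ha, hb]

theorem σ_ga : σ ga = ga * gb := by simp [σ, mkAut, ga]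

theorem σ_gb : σ gb = gb := by simp [σ, mkAut, gb]

theorem τ_ga : τ ga = ga := by simp [τ, mkAut, ga]

theorem τ_gb : τ gb = gb * ga := by simp [τ, mkAut, gb]

theorem σ_pow_gb (t : ℕ) : (σ ^ t) gb = gb := by
  induction t with
  | zero => rfl
  | succ t ih => rw [pow_succ, MulAut.mul_apply, σ_gb, ih]

theorem σ_pow_ga (t : ℕ) : (σ ^ t) ga = ga * gb ^ t := by
  induction t with
  | zero => simp
  | succ t ih => rw [pow_succ, MulAut.mul_apply, σ_ga, map_mul, ih, σ_pow_gb, mul_assoc, pow_succ]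

/-- The automorphism `a ↦ b, b ↦ a`. -/
def swapGen : MulAut F := freeGroupCongr (Equiv.swap 0 1)

theorem swapGen_ga : swapGen ga = gb := rfl

theorem swapGen_gb : swapGen gb = ga := rfl

theorem swapGen_involutive : Function.Involutive swapGen := fun w => by
  rw [← MulAut.mul_apply, show swapGen * swapGen = 1 from mulAut_ext rfl rfl, MulAut.one_apply]

theorem cyclen_swapGen (w : F) : cyclen (swapGen w) = cyclen w :=
  cyclen_apply_of_involutive swapGen_involutive (fun _ => (norm_of _).le) w

theorem semiconjBy_swapGen : SemiconjBy swapGen σ τ :=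
  mulAut_ext (by simp [σ_ga, swapGen_ga, swapGen_gb, τ_gb]) (by simp [σ_gb, swapGen_gb, τ_ga])

theorem τ_pow_swapGen (t : ℕ) (w : F) : (τ ^ t) (swapGen w) = swapGen ((σ ^ t) w) :=
  (DFunLike.congr_fun (semiconjBy_swapGen.pow_right t).eq w).symm

theorem cyclen_τ_pow (t : ℕ) (w : F) : cyclen ((τ ^ t) w) = cyclen ((σ ^ t) (swapGen w)) := by
  rw [← cyclen_swapGen ((σ ^ t) _), ← τ_pow_swapGen, swapGen_involutive]

end Automorphisms

namespace Syllables

variable {n : ℤ} {e r : Bool} {d : List (Bool × ℤ)}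

theorem mk_bPow (n : ℤ) : mk (bPow n) = gb ^ n := by
  have mk_replicate (k : ℕ) (s : Bool) :
      mk (List.replicate k ((1 : Fin 2), s)) = mk [(1, s)] ^ k := by
    rw [pow_mk, List.flatten_replicate_singleton]
  rw [bPow, mk_replicate]
  obtain ⟨k, rfl | rfl⟩ := n.eq_nat_or_neg
  · rcases k.eq_zero_or_pos with rfl | hk
    · simp
    · simp [hk, gb, of]
  · have inv_gb : mk [((1 : Fin 2), false)] = gb⁻¹ := rfl
    rw [decide_eq_false (by lia), inv_gb]
    simp

theorem mk_word_cons :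
    mk (word ((e, n) :: d)) = (if e then ga else ga⁻¹) * gb ^ n * mk (word d) := by
  rw [word, ← List.singleton_append, ← mul_mk, ← mul_mk, mk_bPow, ← mul_assoc]
  cases e <;> rfl

theorem σ_pow_syllable (t : ℕ) (e q : Bool) (n : ℤ) :
    (σ ^ t) ((if e then ga else ga⁻¹) * gb ^ n) * (if q then 1 else gb ^ (-t : ℤ)) =
      (if e then 1 else gb ^ (-t : ℤ)) * ((if e then ga else ga⁻¹) * gb ^ twistExp t e q n) := by
  rw [map_mul, map_zpow, σ_pow_gb, apply_ite (σ ^ t), map_inv, σ_pow_ga]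
  cases e <;> cases q <;> simp only [twistExp, if_true, if_false, reduceCtorEq] <;> group

theorem σ_pow_mk_word (t : ℕ) :
    (σ ^ t) (mk (word d)) = (if headSign d r then 1 else gb ^ (-t : ℤ)) * mk (word (twist t d r)) *
      (if r then 1 else gb ^ (-t : ℤ))⁻¹ := by
  induction d with
  | nil => simp [word, twist, headSign, ← one_eq_mk]
  | cons p d ih =>
    obtain ⟨e, n⟩ := p
    rw [mk_word_cons, map_mul, ih, twist, mk_word_cons]
    rw [headSign, ← mul_assoc, ← mul_assoc, σ_pow_syllable]
    simp only [mul_assoc]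

theorem isConj_σ_pow_mk_word (t : ℕ) :
    IsConj (mk (word (twist t ((e, n) :: d) e))) ((σ ^ t) (mk (word ((e, n) :: d)))) :=
  isConj_iff.2 ⟨_, (σ_pow_mk_word t).symm⟩

end Syllables

section Growth

open Syllables

/-- The cyclic word represented by `w` has at most `K` opposed letters `a^{±1}` and at most `K`
opposed letters `b^{±1}`. -/
def HasOpposedCountLE (w : F) (K : ℕ) : Prop :=
  ∃ L, IsCyclicallyReduced L ∧ IsConj (mk L) w ∧ ∀ x, cyclicOpposedCount x L ≤ K

variable {w w' : F} {K n : ℕ}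

theorem hasOpposedCountLE_of_cyclen_le (h : cyclen w ≤ K) : HasOpposedCountLE w K := by
  obtain ⟨L, hL, hLw⟩ := exists_isCyclicallyReduced_isConj_mk w
  refine ⟨L, hL, hLw, fun x => (opposedCount_le_length ..).trans ?_⟩
  rwa [← cyclen_mk hL, cyclen_eq_of_isConj hLw]

theorem HasOpposedCountLE.of_isConj (h : HasOpposedCountLE w K) (hw : IsConj w w') :
    HasOpposedCountLE w' K := by
  obtain ⟨L, hL, hLw, hK⟩ := h
  exact ⟨L, hL, hLw.trans hw, hK⟩

theorem HasOpposedCountLE.exists_syllables (h : HasOpposedCountLE w K) :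
    (∃ n : ℤ, IsConj (gb ^ n) w) ∨ ∃ e n d, IsCyclicallyReduced (word ((e, n) :: d)) ∧
      IsConj (mk (word ((e, n) :: d))) w ∧ ∀ x, cyclicOpposedCount x (word ((e, n) :: d)) ≤ K := by
  obtain ⟨L, hL, hLw, hK⟩ := h
  rcases exists_eq_bPow_or_rotation_eq_word hL with ⟨n, rfl⟩ | ⟨L₁, L₂, e, n, d, rfl, hrot⟩
  · exact .inl ⟨n, mk_bPow n ▸ hLw⟩
  · refine .inr ⟨e, n, d, hrot ▸ isCyclicallyReduced_append_comm hL, ?_, fun x => ?_⟩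
    · exact hrot ▸ (isConj_mk_append_comm L₂ L₁).trans hLw
    · rw [← hrot, cyclicOpposedCount_append_comm]
      exact hK x

theorem isConj_σ_pow_of_isConj_gb_zpow {m : ℤ} (h : IsConj (gb ^ m) w) (t : ℕ) :
    IsConj w ((σ ^ t) w) := by
  have hσ : IsConj ((σ ^ t) (gb ^ m)) ((σ ^ t) w) := (σ ^ t).toMonoidHom.map_isConj h
  rw [map_zpow, σ_pow_gb] at hσ
  exact h.symm.trans hσ

theorem HasOpposedCountLE.σ_apply (h : HasOpposedCountLE w K) : HasOpposedCountLE (σ w) K := by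
  rcases h.exists_syllables with ⟨m, hm⟩ | ⟨e, n, d, hred, hw, hK⟩
  · exact h.of_isConj (by simpa using isConj_σ_pow_of_isConj_gb_zpow hm 1)
  · refine ⟨word (twist 1 ((e, n) :: d) e), ?_, ?_, fun x => ?_⟩
    · exact isCyclicallyReduced_word_twist hred
    · exact (isConj_σ_pow_mk_word 1).trans (σ.toMonoidHom.map_isConj hw)
    · exact (cyclicOpposedCount_word_twist_le one_pos hred x).trans (hK x)

theorem HasOpposedCountLE.swapGen_apply (h : HasOpposedCountLE w K) :
    HasOpposedCountLE (swapGen w) K := by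
  obtain ⟨L, hL, hLw, hK⟩ := h
  have hinj : Function.Injective (Equiv.swap (0 : Fin 2) 1) := Equiv.injective _
  refine ⟨_, isCyclicallyReduced_map hinj hL, swapGen.toMonoidHom.map_isConj hLw, fun x => ?_⟩
  rw [← Equiv.swap_apply_self 0 1 x, cyclicOpposedCount_map hinj]
  exact hK _

theorem HasOpposedCountLE.τ_apply (h : HasOpposedCountLE w K) : HasOpposedCountLE (τ w) K := by
  rw [← swapGen_involutive w, ← pow_one τ, τ_pow_swapGen, pow_one]
  exact h.swapGen_apply.σ_apply.swapGen_apply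

theorem HasOpposedCountLE.chainC1_apply (h : HasOpposedCountLE w K) (c : List (ℕ × ℕ)) :
    HasOpposedCountLE (chainC1 c w) K := by
  have pow_apply {φ : MulAut F} (hφ : ∀ {w}, HasOpposedCountLE w K → HasOpposedCountLE (φ w) K)
      (t : ℕ) {w : F} (hw : HasOpposedCountLE w K) : HasOpposedCountLE ((φ ^ t) w) K := by
    induction t with
    | zero => exact hw
    | succ t ih => rw [pow_succ', MulAut.mul_apply]; exact hφ ih
  induction c with
  | nil => exact h
  | cons p c ih => exact pow_apply τ_apply p.2 (pow_apply σ_apply p.1 ih)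

theorem HasOpposedCountLE.exists_cyclen_σ_pow_succ (h : HasOpposedCountLE w K) :
    ∃ s, ∀ t, K ≤ t → cyclen ((σ ^ (t + 1)) w) = cyclen ((σ ^ t) w) + s := by
  rcases h.exists_syllables with ⟨m, hm⟩ | ⟨e, n, d, hred, hw, hK⟩
  · exact ⟨0, fun t _ => by
      rw [← cyclen_eq_of_isConj (isConj_σ_pow_of_isConj_gb_zpow hm (t + 1)),
        ← cyclen_eq_of_isConj (isConj_σ_pow_of_isConj_gb_zpow hm t), add_zero]⟩
  · have cyclen_σ_pow (t : ℕ) :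
        cyclen ((σ ^ t) w) = (word (twist t ((e, n) :: d) e)).length := by
      rw [← cyclen_mk (isCyclicallyReduced_word_twist hred)]
      exact (cyclen_eq_of_isConj <| (isConj_σ_pow_mk_word t).trans <|
        (σ ^ t).toMonoidHom.map_isConj hw).symm
    have hK₁ := hK 1
    rw [cyclicOpposedCount_one_word_cons] at hK₁
    obtain ⟨s, hs⟩ := exists_length_word_twist_succ hK₁
    exact ⟨s, fun t ht => by rw [cyclen_σ_pow, cyclen_σ_pow, ← hs t ht, Nat.cast_succ]⟩

theorem bddAbove_range_iff_of_succ_eq_add {g : ℕ → ℕ} {s : ℕ}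
    (hg : ∀ t, K ≤ t → g (t + 1) = g t + s) (hn : K ≤ n) :
    BddAbove (Set.range g) ↔ g (n + 1) = g n := by
  have hlin (m : ℕ) : g (n + m) = g n + m * s := by
    induction m with
    | zero => simp
    | succ m ih => rw [← add_assoc, hg _ (by lia), ih]; ring
  rw [hg n hn, Nat.add_eq_left]
  constructor
  · rintro ⟨B, hB⟩
    by_contra hs
    have hle : g (n + (B + 1)) ≤ B := hB ⟨_, rfl⟩
    rw [hlin] at hle
    nlinarith [Nat.pos_of_ne_zero hs]
  · rintro rfl
    apply Filter.IsBoundedUnder.bddAbove_range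
    apply Filter.isBoundedUnder_of_eventually_le (a := g n)
    filter_upwards [Filter.eventually_ge_atTop n] with t ht
    obtain ⟨m, rfl⟩ := Nat.exists_eq_add_of_le ht
    simp [hlin]

theorem HasOpposedCountLE.bddAbove_range_cyclen_σ_pow_iff (h : HasOpposedCountLE w K)
    (hn : K ≤ n) : BddAbove (Set.range fun t : ℕ => cyclen ((σ ^ t) w)) ↔
      cyclen ((σ ^ (n + 1)) w) = cyclen ((σ ^ n) w) := by
  obtain ⟨s, hs⟩ := h.exists_cyclen_σ_pow_succ
  exact bddAbove_range_iff_of_succ_eq_add hs hn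

end Growth

section BoundedTranslationEquivalence

/-- Bounded translation equivalence: the cyclic lengths of `φ u` and `φ v` are within a common
factor of each other, uniformly in the automorphism `φ`. -/
def BoundedlyTranslationEquivalent (u v : F) : Prop :=
  ∃ C : ℝ, 0 < C ∧ ∀ φ : MulAut F,
    (cyclen (φ u) : ℝ) ≤ C * cyclen (φ v) ∧ (cyclen (φ v) : ℝ) ≤ C * cyclen (φ u)

namespace BoundedlyTranslationEquivalent

variable {u v : F}

theorem symm (h : BoundedlyTranslationEquivalent u v) : BoundedlyTranslationEquivalent v u := by
  obtain ⟨C, hC, hφ⟩ := h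
  exact ⟨C, hC, fun φ => (hφ φ).symm⟩

theorem map (h : BoundedlyTranslationEquivalent u v) (ψ : MulAut F) :
    BoundedlyTranslationEquivalent (ψ u) (ψ v) := by
  obtain ⟨C, hC, hφ⟩ := h
  exact ⟨C, hC, fun φ => hφ (φ * ψ)⟩

theorem bddAbove_range_cyclen (h : BoundedlyTranslationEquivalent u v) {ι : Type*}
    (φ : ι → MulAut F) (hu : BddAbove (Set.range fun i => cyclen (φ i u))) :
    BddAbove (Set.range fun i => cyclen (φ i v)) := by
  obtain ⟨C, hC, hφ⟩ := h
  obtain ⟨B, hB⟩ := hu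
  refine ⟨⌊C * B⌋₊, Set.forall_mem_range.2 fun i => Nat.le_floor ?_⟩
  calc (cyclen (φ i v) : ℝ) ≤ C * cyclen (φ i u) := (hφ (φ i)).2
    _ ≤ C * B := by gcongr; exact hB ⟨i, rfl⟩

theorem bddAbove_range_cyclen_iff (h : BoundedlyTranslationEquivalent u v) {ι : Type*}
    (φ : ι → MulAut F) : BddAbove (Set.range fun i => cyclen (φ i u)) ↔
      BddAbove (Set.range fun i => cyclen (φ i v)) :=
  ⟨h.bddAbove_range_cyclen φ, h.symm.bddAbove_range_cyclen φ⟩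

variable {K n : ℕ}

theorem cyclen_σ_pow_succ_eq_iff (h : BoundedlyTranslationEquivalent u v)
    (hu : HasOpposedCountLE u K) (hv : HasOpposedCountLE v K) (hn : K ≤ n) :
    cyclen ((σ ^ (n + 1)) u) = cyclen ((σ ^ n) u) ↔
      cyclen ((σ ^ (n + 1)) v) = cyclen ((σ ^ n) v) := by
  rw [← hu.bddAbove_range_cyclen_σ_pow_iff hn, ← hv.bddAbove_range_cyclen_σ_pow_iff hn,
    h.bddAbove_range_cyclen_iff]

theorem cyclen_τ_pow_succ_eq_iff (h : BoundedlyTranslationEquivalent u v)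
    (hu : HasOpposedCountLE u K) (hv : HasOpposedCountLE v K) (hn : K ≤ n) :
    cyclen ((τ ^ (n + 1)) u) = cyclen ((τ ^ n) u) ↔
      cyclen ((τ ^ (n + 1)) v) = cyclen ((τ ^ n) v) := by
  simp only [cyclen_τ_pow]
  exact (h.map swapGen).cyclen_σ_pow_succ_eq_iff hu.swapGen_apply hv.swapGen_apply hn

end BoundedlyTranslationEquivalent

end BoundedTranslationEquivalence

section NegativeChains

/-- The automorphism `a ↦ a, b ↦ b⁻¹`. -/
def invGen : MulAut F :=
  mkAut ga gb⁻¹ ga gb⁻¹ (by simp [ga]) (by simp [gb]) (by simp [ga]) (by simp [gb])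

theorem invGen_ga : invGen ga = ga := by simp [invGen, mkAut, ga]

theorem invGen_gb : invGen gb = gb⁻¹ := by simp [invGen, mkAut, gb]

theorem invGen_involutive : Function.Involutive invGen := fun w => by
  have invGen_mul_self : invGen * invGen = 1 :=
    mulAut_ext (by simp [invGen_ga]) (by simp [invGen_gb])
  rw [← MulAut.mul_apply, invGen_mul_self, MulAut.one_apply]

theorem cyclen_invGen (w : F) : cyclen (invGen w) = cyclen w := by
  refine cyclen_apply_of_involutive invGen_involutive (fun i => ?_) w
  fin_cases i
  · exact (congrArg len invGen_ga).trans_le (norm_of _).le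
  · exact (congrArg len invGen_gb).trans_le (norm_inv_eq.trans (norm_of _)).le

/-- The pairs `(φ, ψ)` of automorphisms for which `φ` and `invGen * ψ * invGen` agree on conjugacy
classes. -/
def outerInvGenPairs : Submonoid (MulAut F × MulAut F) where
  carrier := {p | ∀ w, IsConj (p.1 (invGen w)) (invGen (p.2 w))}
  one_mem' _ := .refl _
  mul_mem' {p q} hp hq w := (p.1.toMonoidHom.map_isConj (hq w)).trans (hp (q.2 w))

theorem σ_inv_mem_outerInvGenPairs : (σ⁻¹, σ) ∈ outerInvGenPairs := by
  have σ_inv_mul : σ⁻¹ * invGen = invGen * σ := inv_mul_eq_iff_eq_mul.2 <|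
    mulAut_ext (by simp [σ_ga, σ_gb, invGen_ga, invGen_gb]) (by simp [σ_gb, invGen_gb])
  exact fun w => isConj_iff.2 ⟨1, by simpa using DFunLike.congr_fun σ_inv_mul w⟩

theorem τ_inv_mem_outerInvGenPairs : (τ⁻¹, τ) ∈ outerInvGenPairs := by
  have τ_inv_mul : τ⁻¹ * invGen = MulAut.conj ga * (invGen * τ) := inv_mul_eq_iff_eq_mul.2 <|
    mulAut_ext (by simp [τ_ga, invGen_ga])
      (by simp [τ_ga, τ_gb, invGen_ga, invGen_gb, mul_assoc])
  exact fun w => (isConj_iff.2 ⟨ga, (DFunLike.congr_fun τ_inv_mul w).symm⟩).symm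

theorem chainC2_chainC1_mem_outerInvGenPairs (c : List (ℕ × ℕ)) :
    (chainC2 c, chainC1 c) ∈ outerInvGenPairs := by
  induction c with
  | nil => exact outerInvGenPairs.one_mem
  | cons p c ih =>
    have hτ := pow_mem τ_inv_mem_outerInvGenPairs p.2
    have hσ := pow_mem σ_inv_mem_outerInvGenPairs p.1
    simpa [chainC2, chainC1] using mul_mem (mul_mem hτ hσ) ih

theorem cyclen_zpow_neg_chainC2 {φ : MulAut F} (hφ : (φ⁻¹, φ) ∈ outerInvGenPairs) (n : ℕ)
    (c : List (ℕ × ℕ)) (w : F) :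
    cyclen ((φ ^ (-n : ℤ)) (chainC2 c w)) = cyclen ((φ ^ n) (chainC1 c (invGen w))) := by
  have hmem := mul_mem (pow_mem hφ n) (chainC2_chainC1_mem_outerInvGenPairs c)
  have hconj := cyclen_eq_of_isConj (hmem (invGen w))
  rw [cyclen_invGen, invGen_involutive] at hconj
  simpa using hconj

end NegativeChains

theorem stmt13_general {u v : F} (huv : BoundedlyTranslationEquivalent u v) {n : ℕ}
    (hu : cyclen u ≤ n) (hv : cyclen v ≤ n) (c : List (ℕ × ℕ)) :
    ((cyclen ((σ ^ (n + 1)) (chainC1 c u)) = cyclen ((σ ^ n) (chainC1 c u)) ↔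
        cyclen ((σ ^ (n + 1)) (chainC1 c v)) = cyclen ((σ ^ n) (chainC1 c v))) ∧
      (cyclen ((τ ^ (n + 1)) (chainC1 c u)) = cyclen ((τ ^ n) (chainC1 c u)) ↔
        cyclen ((τ ^ (n + 1)) (chainC1 c v)) = cyclen ((τ ^ n) (chainC1 c v)))) ∧
    (cyclen ((σ ^ (-n - 1 : ℤ)) (chainC2 c u)) = cyclen ((σ ^ (-n : ℤ)) (chainC2 c u)) ↔
      cyclen ((σ ^ (-n - 1 : ℤ)) (chainC2 c v)) = cyclen ((σ ^ (-n : ℤ)) (chainC2 c v))) ∧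
    (cyclen ((τ ^ (-n - 1 : ℤ)) (chainC2 c u)) = cyclen ((τ ^ (-n : ℤ)) (chainC2 c u)) ↔
      cyclen ((τ ^ (-n - 1 : ℤ)) (chainC2 c v)) = cyclen ((τ ^ (-n : ℤ)) (chainC2 c v))) := by
  have hchain {w : F} (hw : cyclen w ≤ n) : HasOpposedCountLE (chainC1 c w) n :=
    (hasOpposedCountLE_of_cyclen_le hw).chainC1_apply c
  have succ_cast : -(n : ℤ) - 1 = -((n + 1 : ℕ) : ℤ) := by push_cast; ring
  rw [succ_cast]
  simp only [cyclen_zpow_neg_chainC2 σ_inv_mem_outerInvGenPairs,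
    cyclen_zpow_neg_chainC2 τ_inv_mem_outerInvGenPairs]
  have hu' := hchain ((cyclen_invGen u).trans_le hu)
  have hv' := hchain ((cyclen_invGen v).trans_le hv)
  have huv₁ := huv.map (chainC1 c)
  have huv₂ := huv.map (chainC1 c * invGen)
  exact ⟨⟨huv₁.cyclen_σ_pow_succ_eq_iff (hchain hu) (hchain hv) le_rfl,
      huv₁.cyclen_τ_pow_succ_eq_iff (hchain hu) (hchain hv) le_rfl⟩,
    ⟨huv₂.cyclen_σ_pow_succ_eq_iff hu' hv' le_rfl,
      huv₂.cyclen_τ_pow_succ_eq_iff hu' hv' le_rfl⟩⟩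

/-- Theorem 4.8 (converse of Theorem 4.7):  here `k = ‖u‖ + 1`. -/
theorem stmt13 (u v : F) (huv : cyclen v ≤ cyclen u)
    (hbte : ∃ C : ℝ, 0 < C ∧ ∀ φ : MulAut F,
      (cyclen (φ u) : ℝ) ≤ C * cyclen (φ v) ∧ (cyclen (φ v) : ℝ) ≤ C * cyclen (φ u)) :
    (∀ c : List (ℕ × ℕ), c ≠ [] → chainLen c ≤ 2 * cyclen u + 5 →
      ((cyclen ((σ ^ (cyclen u + 2)) (chainC1 c u)) = cyclen ((σ ^ (cyclen u + 1)) (chainC1 c u)) ↔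
        cyclen ((σ ^ (cyclen u + 2)) (chainC1 c v)) = cyclen ((σ ^ (cyclen u + 1)) (chainC1 c v))) ∧
       (cyclen ((τ ^ (cyclen u + 2)) (chainC1 c u)) = cyclen ((τ ^ (cyclen u + 1)) (chainC1 c u)) ↔
        cyclen ((τ ^ (cyclen u + 2)) (chainC1 c v)) = cyclen ((τ ^ (cyclen u + 1)) (chainC1 c v))))) ∧
    (∀ c : List (ℕ × ℕ), c ≠ [] → chainLen c ≤ 2 * cyclen u + 5 →
      ((cyclen ((σ ^ (-(cyclen u : ℤ) - 2)) (chainC2 c u)) = cyclen ((σ ^ (-(cyclen u : ℤ) - 1)) (chainC2 c u)) ↔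
        cyclen ((σ ^ (-(cyclen u : ℤ) - 2)) (chainC2 c v)) = cyclen ((σ ^ (-(cyclen u : ℤ) - 1)) (chainC2 c v))) ∧
       (cyclen ((τ ^ (-(cyclen u : ℤ) - 2)) (chainC2 c u)) = cyclen ((τ ^ (-(cyclen u : ℤ) - 1)) (chainC2 c u)) ↔
        cyclen ((τ ^ (-(cyclen u : ℤ) - 2)) (chainC2 c v)) = cyclen ((τ ^ (-(cyclen u : ℤ) - 1)) (chainC2 c v))))) := by
  have h := stmt13_general hbte (n := cyclen u + 1) (by lia) (by lia)
  push_cast [neg_add'] at h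
  rw [show -(cyclen u : ℤ) - 2 = -(cyclen u : ℤ) - 1 - 1 by ring]
  exact ⟨fun c _ _ => (h c).1, fun c _ _ => (h c).2⟩
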